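/- Let Ω ⊂ ℂ be a C¹ K-quasidisc and let φ : 𝔻 → Ω be a conformal mapping of the unit disc onto Ω. Then for every p with 1 ≤ p and p(K² − 1) < 2K², the complex derivative satisfies ∬_𝔻 |φ′(z)|^p dxdy < ∞. -/

import Mathlib

open MeasureTheory Metric Real
open scoped ENNReal NNReal

/-- A `C¹` `K`-quasiconformal homeomorphism of `ℂ` onto itself: a `C¹`
bijection of the plane with everywhere positive Jacobian determinant satisfying
`‖Dφ(z)‖² ≤ K·J(z,φ)` everywhere. -/
def IsC1QCPlane (K : ℝ) (φ : ℂ → ℂ) : Prop :=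
  ContDiff ℝ 1 φ ∧ Function.Bijective φ ∧
  ∀ z : ℂ, 0 < (fderiv ℝ φ z).det ∧ ‖fderiv ℝ φ z‖ ^ 2 ≤ K * (fderiv ℝ φ z).det

/-! A domain with `C¹` boundary is flat at small scales, uniformly over the boundary and up to any
prescribed relative error. Let `w = φ z` lie at depth `s` below the boundary. The complement
contains a disc of radius `s` about a point at distance `4 * s` from `w`, so the Schwarz lemma for
the inversion of `φ` in that disc gives `|φ′(z)| (1 - |z|) ≲ s`. On the inner side `Ω` contains a
sector of fixed size through `w`, of vertex at distance about `s` from `w` and of opening `β * π`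
with `β < 1` as close to `1` as we like. The power map `f` of the disc onto a piece of it reaches
`w` at distance about `s ^ (1 / β)` from the unit circle, and Schwarz–Pick for `φ⁻¹ ∘ f` gives
`s ≲ (1 - |z|) ^ β`. Hence `|φ′(z)| ≲ (1 - |z|) ^ (β - 1)`, and this bound is in `L^p` once `β` is
close enough to `1`, whatever `p` is. -/

open Set Filter
open scoped Topology ComplexConjugate

section InjectiveHolomorphic

theorem not_eventually_eq_of_injOn {X Y : Type*} [TopologicalSpace X] {f : X → Y} {U : Set X}
    {x : X} [(𝓝[≠] x).NeBot] (hU : U ∈ 𝓝 x) (hf : InjOn f U) : ¬∀ᶠ y in 𝓝 x, f y = f x := by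
  intro h
  have hx : ∀ᶠ y in 𝓝[≠] x, y = x := by
    filter_upwards [h.filter_mono nhdsWithin_le_nhds, mem_nhdsWithin_of_mem_nhds hU] with y hy hyU
    exact hf hyU (mem_of_mem_nhds hU) hy
  obtain ⟨y, hy, hyx⟩ := (hx.and eventually_mem_nhdsWithin).exists
  exact hyx hy

variable {f g : ℂ → ℂ} {U : Set ℂ} {z : ℂ}

theorem nhds_le_map_nhds_of_injOn (hf : DifferentiableOn ℂ f U) (hU : U ∈ 𝓝 z)
    (hinj : InjOn f U) : 𝓝 (f z) ≤ map f (𝓝 z) :=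
  (hf.analyticAt hU).eventually_constant_or_nhds_le_map_nhds.resolve_left
    (not_eventually_eq_of_injOn hU hinj)

theorem eventually_deriv_ne_zero_of_injOn (hf : DifferentiableOn ℂ f U) (hU : U ∈ 𝓝 z)
    (hinj : InjOn f U) : ∀ᶠ w in 𝓝[≠] z, deriv f w ≠ 0 := by
  refine (hf.analyticAt hU).deriv.eventually_eq_zero_or_eventually_ne_zero.resolve_left fun h ↦ ?_
  obtain ⟨r, hr, hball⟩ := eventually_nhds_iff_ball.1 (h.and hU)
  refine not_eventually_eq_of_injOn hU hinj ?_
  filter_upwards [ball_mem_nhds z hr] with w hw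
  exact isOpen_ball.is_const_of_deriv_eq_zero (convex_ball z r).isPreconnected
    (hf.mono fun x hx ↦ (hball x hx).2) (fun x hx ↦ (hball x hx).1) hw (mem_ball_self hr)

theorem tendsto_nhds_of_leftInvOn (hf : DifferentiableOn ℂ f U) (hU : U ∈ 𝓝 z)
    (hg : LeftInvOn g f U) : Tendsto g (𝓝 (f z)) (𝓝 z) := by
  refine Tendsto.mono_left ?_ (nhds_le_map_nhds_of_injOn hf hU hg.injOn)
  refine tendsto_map'_iff.2 (tendsto_id.congr' ?_)
  filter_upwards [hU] with w hw using (hg hw).symm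

theorem differentiableAt_of_leftInvOn (hf : DifferentiableOn ℂ f U) (hU : U ∈ 𝓝 z)
    (hg : LeftInvOn g f U) (hz : deriv f z ≠ 0) : DifferentiableAt ℂ g (f z) := by
  have hgz : g (f z) = z := hg (mem_of_mem_nhds hU)
  have hcont : ContinuousAt g (f z) := by
    simpa only [ContinuousAt, hgz] using tendsto_nhds_of_leftInvOn hf hU hg
  refine (HasDerivAt.of_local_left_inverse (f := f) (f' := deriv f z) hcont ?_ hz
    ?_).differentiableAt
  · rw [hgz]
    exact (hf.differentiableAt hU).hasDerivAt
  · filter_upwards [nhds_le_map_nhds_of_injOn hf hU hg.injOn (image_mem_map hU)]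
    rintro _ ⟨w, hw, rfl⟩
    rw [hg hw]

/- Critical points are isolated, so the continuous inverse is holomorphic off a discrete set, and
the singularities there are removable. -/
theorem differentiableOn_image_of_leftInvOn (hf : DifferentiableOn ℂ f U) (hU : IsOpen U)
    (hg : LeftInvOn g f U) : DifferentiableOn ℂ g (f '' U) := by
  rintro _ ⟨z, hz, rfl⟩
  have hUz := hU.mem_nhds hz
  have htendsto : Tendsto g (𝓝 (f z)) (𝓝 z) := tendsto_nhds_of_leftInvOn hf hUz hg
  have hcont : ContinuousAt g (f z) := by simpa only [ContinuousAt, hg hz] using htendsto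
  refine (Complex.analyticAt_of_differentiable_on_punctured_nhds_of_continuousAt ?_
    hcont).differentiableAt.differentiableWithinAt
  have hderiv := eventually_nhdsWithin_iff.1 (eventually_deriv_ne_zero_of_injOn hf hUz hg.injOn)
  filter_upwards [nhdsWithin_le_nhds (htendsto.eventually hderiv), self_mem_nhdsWithin,
    nhdsWithin_le_nhds (nhds_le_map_nhds_of_injOn hf hUz hg.injOn (image_mem_map hUz))]
  rintro _ hw hne ⟨w, hwU, rfl⟩
  rw [hg hwU] at hw
  exact differentiableAt_of_leftInvOn hf (hU.mem_nhds hwU) hg (hw (ne_of_apply_ne f hne))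

end InjectiveHolomorphic

section Schwarz

theorem norm_one_sub_conj_mul_sq_sub_norm_sub_sq (a b : ℂ) :
    ‖1 - conj a * b‖ ^ 2 - ‖b - a‖ ^ 2 = (1 - ‖a‖ ^ 2) * (1 - ‖b‖ ^ 2) := by
  simp only [← Complex.normSq_eq_norm_sq, Complex.normSq_apply, Complex.sub_re, Complex.sub_im,
    Complex.mul_re, Complex.mul_im, Complex.conj_re, Complex.conj_im, Complex.one_re,
    Complex.one_im]
  ring

theorem one_sub_norm_le_norm_one_sub_conj_mul {a b : ℂ} (hb : ‖b‖ ≤ 1) :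
    1 - ‖a‖ ≤ ‖1 - conj a * b‖ := by
  have h : ‖conj a * b‖ ≤ ‖a‖ := by
    rw [norm_mul, RCLike.norm_conj]
    exact mul_le_of_le_one_right (norm_nonneg a) hb
  linarith [norm_sub_norm_le (1 : ℂ) (conj a * b), norm_one (α := ℂ)]

variable {f : ℂ → ℂ}

theorem norm_sub_le_norm_mul_norm_one_sub_conj_mul (hf : DifferentiableOn ℂ f (ball 0 1))
    (hmaps : MapsTo f (ball 0 1) (ball 0 1)) {z : ℂ} (hz : z ∈ ball (0 : ℂ) 1) :
    ‖f z - f 0‖ ≤ ‖z‖ * ‖1 - conj (f 0) * f z‖ := by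
  have hlt {w : ℂ} (hw : w ∈ ball (0 : ℂ) 1) : ‖f w‖ < 1 := mem_ball_zero_iff.1 (hmaps hw)
  have h0 : ‖f 0‖ < 1 := hlt (mem_ball_self one_pos)
  have hpos {w : ℂ} (hw : w ∈ ball (0 : ℂ) 1) : 0 < ‖1 - conj (f 0) * f w‖ :=
    (sub_pos.2 h0).trans_le (one_sub_norm_le_norm_one_sub_conj_mul (hlt hw).le)
  have hle {w : ℂ} (hw : w ∈ ball (0 : ℂ) 1) : ‖f w - f 0‖ ≤ ‖1 - conj (f 0) * f w‖ := by
    refine le_of_sq_le_sq (sub_nonneg.1 ?_) (norm_nonneg _)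
    rw [norm_one_sub_conj_mul_sq_sub_norm_sub_sq]
    exact mul_nonneg (sub_nonneg.2 (pow_le_one₀ (norm_nonneg _) h0.le))
      (sub_nonneg.2 (pow_le_one₀ (norm_nonneg _) (hlt hw).le))
  have hschwarz := Complex.norm_le_norm_of_mapsTo_ball (R := 1) (z := z)
    (f := fun w ↦ (f w - f 0) / (1 - conj (f 0) * f w))
    ((hf.sub_const _).div ((differentiableOn_const _).sub (hf.const_mul _))
      fun w hw ↦ norm_pos_iff.1 (hpos hw))
    (fun w hw ↦ by
      rw [mem_closedBall_zero_iff, norm_div]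
      exact div_le_one_of_le₀ (hle hw) (norm_nonneg _))
    (by simp) (mem_ball_zero_iff.1 hz)
  rwa [norm_div, div_le_iff₀ (hpos hz)] at hschwarz

theorem one_sub_norm_mul_one_sub_norm_le (hf : DifferentiableOn ℂ f (ball 0 1))
    (hmaps : MapsTo f (ball 0 1) (ball 0 1)) {z : ℂ} (hz : z ∈ ball (0 : ℂ) 1) :
    (1 - ‖f 0‖) * (1 - ‖z‖) ≤ 4 * (1 - ‖f z‖) := by
  have h0 : ‖f 0‖ < 1 := mem_ball_zero_iff.1 (hmaps (mem_ball_self one_pos))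
  have hfz : ‖f z‖ < 1 := mem_ball_zero_iff.1 (hmaps hz)
  have hz1 : ‖z‖ < 1 := mem_ball_zero_iff.1 hz
  have hpick : (1 - ‖z‖ ^ 2) * ‖1 - conj (f 0) * f z‖ ^ 2 ≤
      (1 - ‖f 0‖ ^ 2) * (1 - ‖f z‖ ^ 2) := by
    have hsq := pow_le_pow_left₀ (norm_nonneg _)
      (norm_sub_le_norm_mul_norm_one_sub_conj_mul hf hmaps hz) 2
    rw [mul_pow] at hsq
    linarith [norm_one_sub_conj_mul_sq_sub_norm_sub_sq (f 0) (f z)]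
  have hzsq : 1 - ‖z‖ ≤ 1 - ‖z‖ ^ 2 := by nlinarith [norm_nonneg z]
  have hlow : (1 - ‖z‖) * (1 - ‖f 0‖) ^ 2 ≤ (1 - ‖z‖ ^ 2) * ‖1 - conj (f 0) * f z‖ ^ 2 := by
    have h := one_sub_norm_le_norm_one_sub_conj_mul (a := f 0) hfz.le
    have : 0 ≤ 1 - ‖f 0‖ := by linarith
    have : 0 ≤ 1 - ‖z‖ ^ 2 := by linarith
    gcongr
  refine le_of_mul_le_mul_left ?_ (sub_pos.2 h0)
  calc (1 - ‖f 0‖) * ((1 - ‖f 0‖) * (1 - ‖z‖)) = (1 - ‖z‖) * (1 - ‖f 0‖) ^ 2 := by ring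
    _ ≤ (1 - ‖f 0‖ ^ 2) * (1 - ‖f z‖ ^ 2) := hlow.trans hpick
    _ = (1 - ‖f 0‖) * ((1 + ‖f 0‖) * (1 + ‖f z‖) * (1 - ‖f z‖)) := by ring
    _ ≤ (1 - ‖f 0‖) * (4 * (1 - ‖f z‖)) := by
      gcongr
      nlinarith [norm_nonneg (f 0), norm_nonneg (f z)]

theorem norm_deriv_le_of_forall_le_norm_sub {c b : ℂ} {R ρ : ℝ} (hR : 0 < R) (hρ : 0 < ρ)
    (hf : DifferentiableOn ℂ f (ball c R)) (hb : ∀ z ∈ ball c R, ρ ≤ ‖f z - b‖) :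
    ‖deriv f c‖ ≤ 2 * ‖f c - b‖ ^ 2 / (ρ * R) := by
  have hne : ∀ z ∈ ball c R, f z - b ≠ 0 := fun z hz ↦ norm_pos_iff.1 (hρ.trans_le (hb z hz))
  have hc : c ∈ ball c R := mem_ball_self hR
  have hinv : ∀ z ∈ ball c R, ‖(f z - b)⁻¹‖ ≤ ρ⁻¹ := fun z hz ↦ by
    rw [norm_inv]
    exact inv_anti₀ hρ (hb z hz)
  have hschwarz := Complex.norm_deriv_le_div_of_mapsTo_ball (f := fun z ↦ (f z - b)⁻¹)
    (R₂ := ρ⁻¹ + ρ⁻¹) ((hf.sub_const b).fun_inv hne)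
    (fun z hz ↦ mem_closedBall_iff_norm.2
      ((norm_sub_le _ _).trans (add_le_add (hinv z hz) (hinv c hc)))) hR
  have hderiv : HasDerivAt f (deriv f c) c :=
    (hf.differentiableAt (isOpen_ball.mem_nhds hc)).hasDerivAt
  have hpos : 0 < ‖f c - b‖ := norm_pos_iff.2 (hne c hc)
  rw [((hderiv.sub_const b).fun_inv (hne c hc)).deriv, norm_div, norm_neg, norm_pow,
    div_le_iff₀ (by positivity)] at hschwarz
  exact hschwarz.trans_eq (by field_simp; norm_num)

end Schwarz

section Integrability

variable {E F : Type*} [NormedAddCommGroup E] [NormedSpace ℝ E] [FiniteDimensional ℝ E]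
  [Nontrivial E] [MeasurableSpace E] [BorelSpace E] [NormedAddCommGroup F]
  {μ : Measure E} [μ.IsAddHaarMeasure]

theorem integrableOn_one_sub_norm_rpow_ball {a : ℝ} (ha : -1 < a) :
    IntegrableOn (fun x : E ↦ (1 - ‖x‖) ^ a) (ball 0 1) μ := by
  rw [integrableOn_fun_norm_addHaar μ (f := fun t ↦ (1 - t) ^ a),
    ← intervalIntegrable_iff_integrableOn_Ioo_of_le zero_le_one]
  have hint : IntervalIntegrable (fun t : ℝ ↦ (1 - t) ^ a) volume 0 1 := by
    simpa using ((intervalIntegral.intervalIntegrable_rpow' ha (a := 0) (b := 1)).comp_sub_left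
      1).symm
  exact hint.continuousOn_mul (by fun_prop)

theorem lintegral_enorm_rpow_lt_top_of_norm_le {f : E → F} {C a p : ℝ} (hp : 0 ≤ p)
    (ha : -1 < a * p) (hf : ∀ x ∈ ball (0 : E) 1, ‖f x‖ ≤ C * (1 - ‖x‖) ^ a) :
    ∫⁻ x in ball (0 : E) 1, ‖f x‖ₑ ^ p ∂μ < ⊤ := by
  have hC : 0 ≤ C := by simpa using (norm_nonneg _).trans (hf 0 (mem_ball_self one_pos))
  refine (setLIntegral_mono' measurableSet_ball fun x hx ↦ ?_).trans_lt
    ((integrableOn_one_sub_norm_rpow_ball ha (μ := μ)).const_mul (C ^ p)).2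
  have hx1 : 0 ≤ 1 - ‖x‖ := sub_nonneg.2 (mem_ball_zero_iff.1 hx).le
  rw [← ofReal_norm, ← ofReal_norm, ENNReal.ofReal_rpow_of_nonneg (norm_nonneg _) hp]
  refine ENNReal.ofReal_le_ofReal ?_
  calc ‖f x‖ ^ p ≤ (C * (1 - ‖x‖) ^ a) ^ p := by gcongr; exact hf x hx
    _ = C ^ p * (1 - ‖x‖) ^ (a * p) := by rw [mul_rpow hC (by positivity), ← rpow_mul hx1]
    _ ≤ ‖C ^ p * (1 - ‖x‖) ^ (a * p)‖ := le_norm_self _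

end Integrability

section DefiningFunction

/-- `F` is a `C¹` defining function of the bounded open set `Ω` with `C¹` boundary: `Ω` is the
sublevel set `{F < 0}`, its closure is the compact set `{F ≤ 0}`, and its boundary `{F = 0}` is a
regular level set. -/
structure IsC1DefiningFunction {E : Type*} [NormedAddCommGroup E] [NormedSpace ℝ E]
    (F : E → ℝ) (Ω : Set E) : Prop where
  contDiff : ContDiff ℝ 1 F
  eq_setOf_neg : Ω = {x | F x < 0}
  isCompact : IsCompact {x | F x ≤ 0}
  fderiv_ne_zero : ∀ x, F x = 0 → fderiv ℝ F x ≠ 0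

theorem IsC1DefiningFunction.isBounded {E : Type*} [NormedAddCommGroup E] [NormedSpace ℝ E]
    {F : E → ℝ} {Ω : Set E} (hF : IsC1DefiningFunction F Ω) : Bornology.IsBounded Ω := by
  rw [hF.eq_setOf_neg]
  exact hF.isCompact.isBounded.subset fun x (hx : F x < 0) ↦ hx.le

theorem exists_homeomorph_contDiff_symm {E : Type*} [NormedAddCommGroup E] [NormedSpace ℝ E]
    [FiniteDimensional ℝ E] {Φ : E → E} (hΦ : ContDiff ℝ 1 Φ) (hbij : Function.Bijective Φ)
    (hdet : ∀ x, (fderiv ℝ Φ x).det ≠ 0) :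
    ∃ H : E ≃ₜ E, ⇑H = Φ ∧ ContDiff ℝ 1 H.symm := by
  have := FiniteDimensional.complete ℝ E
  have hderiv (x : E) : HasFDerivAt Φ
      ((fderiv ℝ Φ x).toContinuousLinearEquivOfDetNeZero (hdet x) : E →L[ℝ] E) x := by
    rw [ContinuousLinearMap.coe_toContinuousLinearEquivOfDetNeZero]
    exact (hΦ.differentiable one_ne_zero x).hasFDerivAt
  have hopen : IsOpenMap Φ := IsOpenMap.of_nhds_le fun x ↦
    ((hΦ.contDiffAt.hasStrictFDerivAt' (hderiv x) one_ne_zero).map_nhds_eq_of_equiv).ge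
  let H : E ≃ₜ E := (Equiv.ofBijective Φ hbij).toHomeomorphOfContinuousOpen hΦ.continuous hopen
  exact ⟨H, rfl, H.contDiff_symm hderiv hΦ⟩

theorem isC1DefiningFunction_norm_symm_sq_sub_one {E E' : Type*} [NormedAddCommGroup E]
    [InnerProductSpace ℝ E] [FiniteDimensional ℝ E] [NormedAddCommGroup E'] [NormedSpace ℝ E']
    (H : E ≃ₜ E') (hH : Differentiable ℝ H) (hsymm : ContDiff ℝ 1 H.symm) :
    IsC1DefiningFunction (fun w ↦ ‖H.symm w‖ ^ 2 - 1) (H '' ball 0 1) where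
  contDiff := (hsymm.norm_sq ℝ).sub contDiff_const
  eq_setOf_neg := by
    ext w
    simp [H.image_eq_preimage_symm, sq_lt_one_iff_abs_lt_one]
  isCompact := by
    have := FiniteDimensional.proper ℝ E
    have himage : {w | ‖H.symm w‖ ^ 2 - 1 ≤ 0} = H '' closedBall 0 1 := by
      ext w
      simp [H.image_eq_preimage_symm, sq_le_one_iff_abs_le_one]
    rw [himage]
    exact (isCompact_closedBall _ _).image H.continuous
  fderiv_ne_zero w hw h0 := by
    have hF : HasFDerivAt (𝕜 := ℝ) (fun w ↦ ‖H.symm w‖ ^ 2 - 1) 0 (H (H.symm w)) := by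
      rw [H.apply_symm_apply, ← h0]
      exact (((hsymm.norm_sq ℝ).sub contDiff_const).differentiable one_ne_zero w).hasFDerivAt
    have hnorm_sq := hF.comp _ (hH (H.symm w)).hasFDerivAt
    simp only [Function.comp_def, H.symm_apply_apply, ContinuousLinearMap.zero_comp] at hnorm_sq
    have heq : 0 = 2 • innerSL ℝ (H.symm w) := hnorm_sq.unique
      ((hasStrictFDerivAt_norm_sq (H.symm w)).hasFDerivAt.sub_const (1 : ℝ))
    have hzero : H.symm w = 0 := by simpa using DFunLike.congr_fun heq (H.symm w)
    simp [hzero] at hw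

theorem exists_forall_norm_sub_sub_fderiv_le {E F : Type*} [NormedAddCommGroup E]
    [NormedSpace ℝ E] [NormedAddCommGroup F] [NormedSpace ℝ F] {f : E → F}
    (hf : ContDiff ℝ 1 f) {K : Set E} (hK : IsCompact K) {ε : ℝ} (hε : 0 < ε) :
    ∃ r > 0, ∀ x ∈ K, ∀ y, ‖y‖ ≤ r → ‖f (x + y) - f x - fderiv ℝ f x y‖ ≤ ε * ‖y‖ := by
  obtain ⟨δ, hδ, hunif⟩ := mem_uniformity_dist.1 <| hK.uniformContinuousAt_of_continuousAt
    (fderiv ℝ f) (fun _ _ ↦ (hf.continuous_fderiv one_ne_zero).continuousAt)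
    (dist_mem_uniformity hε)
  refine ⟨δ / 2, half_pos hδ, fun x hx y hy ↦ ?_⟩
  have hbound : ∀ z ∈ closedBall x (δ / 2), ‖fderiv ℝ f z - fderiv ℝ f x‖ ≤ ε := by
    intro z hz
    rw [← dist_eq_norm, dist_comm]
    have hxz : dist x z < δ := by
      rw [dist_comm]
      exact (mem_closedBall.1 hz).trans_lt (half_lt_self hδ)
    exact (hunif hxz hx).le
  simpa using (convex_closedBall x (δ / 2)).norm_image_sub_le_of_norm_hasFDerivWithin_le'
    (fun z _ ↦ (hf.differentiable one_ne_zero z).hasFDerivAt.hasFDerivWithinAt) hbound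
    (mem_closedBall_self (half_pos hδ).le) (y := x + y) (by simpa using hy)

theorem exists_norm_eq_one_forall_apply_mul {L : ℂ →L[ℝ] ℝ} (hL : L ≠ 0) :
    ∃ n : ℂ, ‖n‖ = 1 ∧ ∀ v, L (n * v) = -(‖L‖ * v.re) := by
  set g := (InnerProductSpace.toDual ℝ ℂ).symm L with hg
  have hnorm : ‖g‖ = ‖L‖ := by simp [hg]
  have hne : (‖g‖ : ℂ) ≠ 0 := by rw [hnorm]; simpa using hL
  refine ⟨-(g / ‖g‖), by simpa using hne, fun v ↦ ?_⟩
  have hmul : -(g / ‖g‖) * v * conj g = ((-‖g‖ : ℝ) : ℂ) * v := by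
    have := Complex.mul_conj' g
    push_cast
    field_simp
    linear_combination (-v) * this
  rw [← InnerProductSpace.toDual_symm_apply, ← hg, Complex.inner, hmul, Complex.re_ofReal_mul,
    hnorm, neg_mul]

end DefiningFunction

section Flat

/-- Near `w`, at scale `r` and up to a relative error `η`, the set `Ω` is the half-plane
`{w + n * v | 0 < s + v.re}`, so that `n` plays the role of the inner unit normal and `s` that of
the distance from `w` to the boundary. -/
structure IsFlatAt (Ω : Set ℂ) (η r : ℝ) (w n : ℂ) (s : ℝ) : Prop where
  norm_eq_one : ‖n‖ = 1
  mem : ∀ v : ℂ, ‖v‖ ≤ r → η * ‖v‖ < s + v.re → w + n * v ∈ Ω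
  notMem : ∀ v : ℂ, ‖v‖ ≤ r → s + v.re < -(η * ‖v‖) → w + n * v ∉ Ω

/-- A uniform version of flatness: at one common scale, `Ω` is `η`-flat at each of its points, as
soon as the point is close enough to the boundary. -/
def HasFlatBoundary (Ω : Set ℂ) (η : ℝ) : Prop :=
  ∃ r > 0, ∀ ε > 0, ∃ ρ > 0, ∀ w ∈ Ω,
    ball w ρ ⊆ Ω ∨ ∃ n, ∃ s ∈ Ioc 0 ε, IsFlatAt Ω η r w n s

theorem isFlatAt_setOf_neg {F : ℂ → ℝ} {η r G : ℝ} {w n : ℂ} (hn : ‖n‖ = 1) (hG : 0 < G)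
    (hF : ∀ v : ℂ, ‖v‖ ≤ r → |F (w + n * v) - F w + G * v.re| ≤ G * (η * ‖v‖)) :
    IsFlatAt {x | F x < 0} η r w n (-F w / G) where
  norm_eq_one := hn
  mem v hv h := by
    have hle := (abs_le.1 (hF v hv)).2
    rw [← mul_lt_mul_iff_right₀ hG, mul_add, mul_div_cancel₀ _ hG.ne'] at h
    change F (w + n * v) < 0
    linarith
  notMem v hv h := by
    have hle := (abs_le.1 (hF v hv)).1
    rw [← mul_lt_mul_iff_right₀ hG, mul_add, mul_div_cancel₀ _ hG.ne'] at h
    change ¬F (w + n * v) < 0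
    linarith

theorem IsC1DefiningFunction.hasFlatBoundary {F : ℂ → ℝ} {Ω : Set ℂ}
    (hF : IsC1DefiningFunction F Ω) {η : ℝ} (hη : 0 < η) : HasFlatBoundary Ω η := by
  obtain rfl := hF.eq_setOf_neg
  have hcont : Continuous F := hF.contDiff.continuous
  obtain ⟨c, hc, hgrad⟩ : ∃ c > 0, ∀ w ∈ {x | F x ≤ 0}, c ≤ max (-F w) ‖fderiv ℝ F w‖ :=
    hF.isCompact.exists_forall_le'
      (hcont.neg.max (hF.contDiff.continuous_fderiv one_ne_zero).norm).continuousOn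
      fun w hw ↦ lt_max_iff.2 <| (lt_or_eq_of_le hw).imp neg_pos.2 fun h ↦
        norm_pos_iff.2 (hF.fderiv_ne_zero w h)
  obtain ⟨r, hr, hunif⟩ :=
    exists_forall_norm_sub_sub_fderiv_le hF.contDiff hF.isCompact (mul_pos hc hη)
  refine ⟨r, hr, fun ε hε ↦ ?_⟩
  have hmin : 0 < min c (c * ε) := lt_min hc (mul_pos hc hε)
  have hdeep : IsCompact {x | F x ≤ -min c (c * ε)} :=
    hF.isCompact.of_isClosed_subset (isClosed_le hcont continuous_const) fun _ hx ↦
      le_trans hx (neg_nonpos.2 hmin.le)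
  obtain ⟨ρ, hρ, hthick⟩ := hdeep.exists_thickening_subset_open
    (isOpen_lt hcont continuous_const) fun _ hx ↦
      lt_of_le_of_lt hx (neg_neg_iff_pos.2 hmin)
  refine ⟨ρ, hρ, fun w hw ↦ (le_or_gt (F w) (-min c (c * ε))).imp
    (fun hw ↦ (ball_subset_thickening hw ρ).trans hthick) fun hshallow ↦ ?_⟩
  have hlt : -F w < min c (c * ε) := by linarith
  have hle : F w ≤ 0 := le_of_lt hw
  have hcG : c ≤ ‖fderiv ℝ F w‖ := (le_max_iff.1 (hgrad w hle)).resolve_left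
    (hlt.trans_le (min_le_left _ _)).not_ge
  have hG : 0 < ‖fderiv ℝ F w‖ := hc.trans_le hcG
  obtain ⟨n, hn, hL⟩ := exists_norm_eq_one_forall_apply_mul (norm_pos_iff.1 hG)
  refine ⟨n, _, ⟨div_pos (neg_pos.2 hw) hG, ?_⟩, isFlatAt_setOf_neg hn hG fun v hv ↦ ?_⟩
  · rw [div_le_iff₀' hG]
    exact hlt.le.trans ((min_le_right _ _).trans (by gcongr))
  · have happrox := hunif w hle (n * v) (by simpa [hn] using hv)
    rw [hL, sub_neg_eq_add, norm_mul, hn, one_mul, Real.norm_eq_abs, mul_assoc] at happrox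
    exact happrox.trans (by gcongr)

end Flat

section Sector

theorem cos_mul_norm_cpow_le_re_cpow {β : ℝ} (hβ : 0 ≤ β) (hβ2 : β ≤ 2) {u : ℂ} (hu : 0 ≤ u.re) :
    cos (β * (π / 2)) * ‖u ^ (β : ℂ)‖ ≤ (u ^ (β : ℂ)).re := by
  rw [Complex.norm_cpow_real, Complex.cpow_ofReal_re, mul_comm, mul_comm u.arg,
    ← cos_abs (β * u.arg), abs_mul, abs_of_nonneg hβ]
  have harg : |u.arg| ≤ π / 2 := Complex.abs_arg_le_pi_div_two_iff.2 hu
  gcongr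
  exact cos_le_cos_of_nonneg_of_le_pi (by positivity) (by nlinarith [pi_pos]) (by gcongr)

/-- The holomorphic map of the unit disc into the sector of vertex `-τ` and opening `β * π` around
the positive real axis that is obtained from the power map `u ↦ u ^ β` of the right half-plane. Its
image is inscribed in the domain near a boundary point; `R` sets its size. -/
noncomputable def sectorMap (R τ β : ℝ) (ζ : ℂ) : ℂ :=
  R * (1 + ζ) ^ (β : ℂ) - τ

variable {R τ β : ℝ} {ζ : ℂ}

theorem re_one_add_pos_of_mem_ball (hζ : ζ ∈ ball (0 : ℂ) 1) : 0 < (1 + ζ).re := by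
  rw [Complex.add_re, Complex.one_re]
  linarith [(abs_le.1 (Complex.abs_re_le_norm ζ)).1, mem_ball_zero_iff.1 hζ]

theorem differentiableOn_sectorMap : DifferentiableOn ℂ (sectorMap R τ β) (ball 0 1) := by
  intro ζ hζ
  have hcpow : DifferentiableAt ℂ (fun ζ : ℂ ↦ (1 + ζ) ^ (β : ℂ)) ζ :=
    DifferentiableAt.cpow_const (by fun_prop) (Or.inl (re_one_add_pos_of_mem_ball hζ))
  exact ((hcpow.const_mul _).sub_const _).differentiableWithinAt

theorem sectorMap_zero : sectorMap R τ β 0 = R - τ := by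
  simp [sectorMap]

theorem sectorMap_rpow_inv_sub_one (hR : 0 < R) (hτ : 0 ≤ τ) (hβ : β ≠ 0) :
    sectorMap R τ β (((τ / R) ^ β⁻¹ - 1 : ℝ) : ℂ) = 0 := by
  have hR' : (R : ℂ) ≠ 0 := Complex.ofReal_ne_zero.2 hR.ne'
  rw [sectorMap, Complex.ofReal_sub, Complex.ofReal_one, add_sub_cancel,
    ← Complex.ofReal_cpow (by positivity), rpow_inv_rpow (by positivity) hβ, Complex.ofReal_div,
    mul_div_cancel₀ _ hR', sub_self]

theorem norm_sectorMap_le_mul_norm_add (hR : 0 ≤ R) (hτ : 0 ≤ τ) :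
    ‖sectorMap R τ β ζ‖ ≤ R * ‖(1 + ζ) ^ (β : ℂ)‖ + τ :=
  (norm_sub_le _ _).trans_eq <| by
    rw [norm_mul, Complex.norm_of_nonneg hR, Complex.norm_of_nonneg hτ]

theorem norm_sectorMap_le (hR : 0 ≤ R) (hτ : 0 ≤ τ) (hβ : 0 ≤ β) (hβ1 : β ≤ 1)
    (hζ : ζ ∈ ball (0 : ℂ) 1) : ‖sectorMap R τ β ζ‖ ≤ 2 * R + τ := by
  have hnorm : ‖1 + ζ‖ ≤ 2 := by
    have := norm_add_le 1 ζ
    rw [norm_one] at this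
    linarith [mem_ball_zero_iff.1 hζ]
  have hcpow : ‖(1 + ζ) ^ (β : ℂ)‖ ≤ 2 :=
    calc ‖(1 + ζ) ^ (β : ℂ)‖ = ‖1 + ζ‖ ^ β := Complex.norm_cpow_real _ _
      _ ≤ 2 ^ β := by gcongr
      _ ≤ 2 ^ (1 : ℝ) := rpow_le_rpow_of_exponent_le one_le_two hβ1
      _ = 2 := rpow_one 2
  calc ‖sectorMap R τ β ζ‖ ≤ R * ‖(1 + ζ) ^ (β : ℂ)‖ + τ := norm_sectorMap_le_mul_norm_add hR hτ
    _ ≤ 2 * R + τ := by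
      rw [mul_comm 2 R]
      gcongr

theorem mul_norm_sectorMap_lt {η : ℝ} (hR : 0 ≤ R) (hτ : 0 < τ) (hβ : 0 ≤ β) (hβ2 : β ≤ 2)
    (hη : 0 ≤ η) (hη1 : η < 1) (hηβ : η ≤ cos (β * (π / 2))) (hζ : ζ ∈ ball (0 : ℂ) 1) :
    η * ‖sectorMap R τ β ζ‖ < 2 * τ + (sectorMap R τ β ζ).re := by
  have hcos : η * ‖(1 + ζ) ^ (β : ℂ)‖ ≤ ((1 + ζ) ^ (β : ℂ)).re :=
    (mul_le_mul_of_nonneg_right hηβ (norm_nonneg _)).trans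
      (cos_mul_norm_cpow_le_re_cpow hβ hβ2 (re_one_add_pos_of_mem_ball hζ).le)
  calc η * ‖sectorMap R τ β ζ‖ ≤ η * (R * ‖(1 + ζ) ^ (β : ℂ)‖ + τ) := by
        gcongr
        exact norm_sectorMap_le_mul_norm_add hR hτ.le
    _ = R * (η * ‖(1 + ζ) ^ (β : ℂ)‖) + η * τ := by ring
    _ ≤ R * ((1 + ζ) ^ (β : ℂ)).re + η * τ := by gcongr
    _ < R * ((1 + ζ) ^ (β : ℂ)).re + 1 * τ := by gcongr
    _ = 2 * τ + (sectorMap R τ β ζ).re := by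
      rw [sectorMap, Complex.sub_re, Complex.re_ofReal_mul, Complex.ofReal_re]
      ring

end Sector

namespace IsFlatAt

variable {Ω : Set ℂ} {η r s R : ℝ} {w n : ℂ}

theorem le_norm_sub (h : IsFlatAt Ω η r w n s) (hη : η ≤ 1 / 4) (hs : 0 < s) (hsr : 5 * s ≤ r)
    {x : ℂ} (hx : x ∈ Ω) : s ≤ ‖x - (w - n * (4 * s))‖ := by
  by_contra! hlt
  have hn : n ≠ 0 := norm_ne_zero_iff.1 (h.norm_eq_one ▸ one_ne_zero)
  obtain ⟨u, rfl⟩ : ∃ u, x = w + n * (u - 4 * s) := ⟨n⁻¹ * (x - w) + 4 * s, by field_simp; ring⟩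
  have hu : ‖u‖ < s := by
    rwa [show w + n * (u - 4 * s) - (w - n * (4 * s)) = n * u by ring, norm_mul, h.norm_eq_one,
      one_mul] at hlt
  have hnorm : ‖u - 4 * s‖ ≤ 5 * s :=
    calc ‖u - 4 * s‖ ≤ ‖u‖ + 4 * s := (norm_sub_le _ _).trans_eq (by simp [abs_of_pos hs])
      _ ≤ 5 * s := by linarith
  refine h.notMem _ (hnorm.trans hsr) ?_ hx
  have hre : (u - 4 * s).re = u.re - 4 * s := by simp
  have hη' : η * ‖u - 4 * s‖ ≤ 1 / 4 * (5 * s) := by gcongr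
  linarith [Complex.re_le_norm u]

theorem norm_deriv_le (h : IsFlatAt Ω η r w n s) (hη : η ≤ 1 / 4) (hs : 0 < s) (hsr : 5 * s ≤ r)
    {f : ℂ → ℂ} {c : ℂ} {d : ℝ} (hd : 0 < d) (hf : DifferentiableOn ℂ f (ball c d))
    (hmaps : MapsTo f (ball c d) Ω) (hfc : f c = w) : ‖deriv f c‖ ≤ 32 * s / d := by
  have hdist : ‖f c - (w - n * (4 * s))‖ = 4 * s := by
    rw [hfc, sub_sub_cancel, norm_mul, h.norm_eq_one]
    simp [abs_of_pos hs]
  calc ‖deriv f c‖ ≤ 2 * ‖f c - (w - n * (4 * s))‖ ^ 2 / (s * d) :=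
        norm_deriv_le_of_forall_le_norm_sub hd hs hf
          fun z hz ↦ h.le_norm_sub hη hs hsr (hmaps hz)
    _ = 32 * s / d := by
      rw [hdist]
      field_simp
      norm_num

theorem ball_subset (h : IsFlatAt Ω η r w n s) (hη : η ≤ 1 / 4) (hs : 0 ≤ s)
    (hsR : s ≤ 2 * R) (hRr : 3 * R ≤ r) : ball (w + n * (R - (s / 2 : ℝ))) (R / 2) ⊆ Ω := by
  intro x hx
  have hn : n ≠ 0 := norm_ne_zero_iff.1 (h.norm_eq_one ▸ one_ne_zero)
  obtain ⟨u, rfl⟩ : ∃ u, x = w + n * (u + (R - s / 2 : ℝ)) :=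
    ⟨n⁻¹ * (x - w) - (R - s / 2 : ℝ), by field_simp; ring⟩
  have hu : ‖u‖ < R / 2 := by
    rwa [mem_ball_iff_norm, Complex.ofReal_sub,
      show w + n * (u + (R - (s / 2 : ℝ))) - (w + n * (R - (s / 2 : ℝ))) = n * u by ring,
      norm_mul, h.norm_eq_one, one_mul] at hx
  have hnorm : ‖u + (R - s / 2 : ℝ)‖ ≤ 3 / 2 * R :=
    calc ‖u + (R - s / 2 : ℝ)‖ ≤ ‖u‖ + (R - s / 2) :=
          (norm_add_le _ _).trans_eq (by rw [Complex.norm_of_nonneg (by linarith)])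
      _ ≤ 3 / 2 * R := by linarith
  refine h.mem _ (by linarith) ?_
  have hre : (u + (R - s / 2 : ℝ)).re = u.re + (R - s / 2) := by simp
  have hη' : η * ‖u + (R - s / 2 : ℝ)‖ ≤ 1 / 4 * (3 / 2 * R) := by gcongr
  linarith [(abs_le.1 (Complex.abs_re_le_norm u)).1]

variable {β : ℝ}

theorem mapsTo_sectorMap (h : IsFlatAt Ω η r w n s) (hη : 0 ≤ η) (hη1 : η < 1)
    (hs : 0 < s) (hsR : s ≤ 2 * R) (hRr : 3 * R ≤ r) (hβ : 0 ≤ β) (hβ1 : β ≤ 1)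
    (hηβ : η ≤ cos (β * (π / 2))) :
    MapsTo (fun ζ ↦ w + n * sectorMap R (s / 2) β ζ) (ball 0 1) Ω := by
  intro ζ hζ
  have hR : 0 ≤ R := by linarith
  refine h.mem _ ?_ ?_
  · exact (norm_sectorMap_le hR (half_pos hs).le hβ hβ1 hζ).trans (by linarith)
  · simpa only [mul_div_cancel₀ s two_ne_zero] using
      mul_norm_sectorMap_lt hR (half_pos hs) hβ (hβ1.trans one_le_two) hη hη1 hηβ hζ

theorem depth_le (h : IsFlatAt Ω η r w n s) (hη : 0 ≤ η) (hη1 : η < 1)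
    (hs : 0 < s) (hsR : s ≤ 2 * R) (hRr : 3 * R ≤ r) (hβ : 0 < β) (hβ1 : β ≤ 1)
    (hηβ : η ≤ cos (β * (π / 2))) {g : ℂ → ℂ} (hg : DifferentiableOn ℂ g Ω)
    (hmaps : MapsTo g Ω (ball 0 1)) {κ : ℝ} (hκ : 0 < κ)
    (hgκ : κ ≤ 1 - ‖g (w + n * (R - (s / 2 : ℝ)))‖) :
    s ≤ 2 * R * (4 * (1 - ‖g w‖) / κ) ^ β := by
  have hR : 0 < R := by linarith
  set t := (s / 2 / R) ^ β⁻¹ with ht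
  have ht0 : 0 < t := by positivity
  have ht1 : t ≤ 1 := rpow_le_one (by positivity)
    (by rw [div_le_one hR]; linarith) (inv_nonneg.2 hβ.le)
  have hnorm : ‖((t - 1 : ℝ) : ℂ)‖ = 1 - t := by
    rw [Complex.norm_real, norm_of_nonpos (by linarith), neg_sub]
  have hzero : sectorMap R (s / 2) β ((t - 1 : ℝ) : ℂ) = 0 :=
    sectorMap_rpow_inv_sub_one hR (half_pos hs).le hβ.ne'
  have hsector := h.mapsTo_sectorMap hη hη1 hs hsR hRr hβ.le hβ1 hηβ
  have hschwarz := one_sub_norm_mul_one_sub_norm_le (z := ((t - 1 : ℝ) : ℂ))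
    (hg.comp ((differentiableOn_sectorMap.const_mul n).const_add w) hsector) (hmaps.comp hsector)
    (by rw [mem_ball_zero_iff, hnorm]; linarith)
  simp only [Function.comp_apply, hnorm, sub_sub_cancel, sectorMap_zero, hzero, mul_zero,
    add_zero] at hschwarz
  have htle : t ≤ 4 * (1 - ‖g w‖) / κ := by
    rw [le_div_iff₀' hκ]
    exact (mul_le_mul_of_nonneg_right hgκ ht0.le).trans hschwarz
  calc s = 2 * R * t ^ β := by
        rw [ht, rpow_inv_rpow (by positivity) hβ.ne']
        field_simp
    _ ≤ 2 * R * (4 * (1 - ‖g w‖) / κ) ^ β := by gcongr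

end IsFlatAt

section DerivativeGrowth

theorem isCompact_setOf_ball_subset {X : Type*} [PseudoMetricSpace X] [ProperSpace X] {Ω : Set X}
    (hΩ : Bornology.IsBounded Ω) {ρ : ℝ} (hρ : 0 < ρ) : IsCompact {x | ball x ρ ⊆ Ω} := by
  have hcompl : {x | ball x ρ ⊆ Ω} = (thickening ρ Ωᶜ)ᶜ := by
    ext x
    simp only [mem_ofPred_eq, mem_compl_iff, mem_thickening_iff, not_exists, not_and, not_lt,
      subset_def, mem_ball']
    exact forall_congr' fun y ↦ by rw [← not_lt, not_imp_not]
  refine isCompact_of_isClosed_isBounded ?_ (hΩ.subset fun x hx ↦ hx (mem_ball_self hρ))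
  rw [hcompl]
  exact isOpen_thickening.isClosed_compl

theorem exists_forall_norm_deriv_le_of_ball_subset {Ω U : Set ℂ} {f g : ℂ → ℂ}
    (hΩ : Bornology.IsBounded Ω) (hU : IsOpen U) (hf : DifferentiableOn ℂ f U)
    (hg : ContinuousOn g Ω) (hmaps : MapsTo g Ω U) (hgf : LeftInvOn g f U) {ρ : ℝ} (hρ : 0 < ρ) :
    ∃ C, ∀ z ∈ U, ball (f z) ρ ⊆ Ω → ‖deriv f z‖ ≤ C := by
  have hsub : {w | ball w ρ ⊆ Ω} ⊆ Ω := fun w hw ↦ hw (mem_ball_self hρ)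
  obtain ⟨C, hC⟩ := ((isCompact_setOf_ball_subset hΩ hρ).image_of_continuousOn
    (hg.mono hsub)).exists_bound_of_continuousOn
      ((hf.deriv hU).continuousOn.mono (hmaps.mono_left hsub).image_subset)
  exact ⟨C, fun z hz hball ↦ hC z ⟨f z, hball, hgf hz⟩⟩

theorem exists_pos_forall_le_one_sub_norm_of_ball_subset {X E : Type*} [PseudoMetricSpace X]
    [ProperSpace X] [SeminormedAddCommGroup E] {Ω : Set X} {g : X → E}
    (hΩ : Bornology.IsBounded Ω) (hg : ContinuousOn g Ω) (hmaps : MapsTo g Ω (ball 0 1))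
    {ρ : ℝ} (hρ : 0 < ρ) : ∃ κ > 0, ∀ x, ball x ρ ⊆ Ω → κ ≤ 1 - ‖g x‖ := by
  have hsub : {x | ball x ρ ⊆ Ω} ⊆ Ω := fun x hx ↦ hx (mem_ball_self hρ)
  exact (isCompact_setOf_ball_subset hΩ hρ).exists_forall_le'
    (continuousOn_const.sub (hg.mono hsub).norm)
    fun x hx ↦ sub_pos.2 (mem_ball_zero_iff.1 (hmaps (hsub hx)))

variable {Ω : Set ℂ} {η β : ℝ} {φ : ℂ → ℂ}

theorem exists_forall_norm_deriv_le_of_hasFlatBoundary (hΩ : HasFlatBoundary Ω η)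
    (hbdd : Bornology.IsBounded Ω) (hη : 0 ≤ η) (hη4 : η ≤ 1 / 4) (hβ : 0 < β) (hβ1 : β ≤ 1)
    (hηβ : η ≤ cos (β * (π / 2))) (hφd : DifferentiableOn ℂ φ (ball 0 1))
    (hφi : InjOn φ (ball 0 1)) (hφim : φ '' ball 0 1 = Ω) :
    ∃ C, ∀ z ∈ ball (0 : ℂ) 1, ‖deriv φ z‖ ≤ C * (1 - ‖z‖) ^ (β - 1) := by
  obtain ⟨r, hr, hflat⟩ := hΩ
  set R := r / 5 with hR
  obtain ⟨ρ, hρ, hflat⟩ := hflat R (by positivity)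
  set ψ := Function.invFunOn φ (ball 0 1)
  have hψφ : LeftInvOn ψ φ (ball 0 1) := hφi.leftInvOn_invFunOn
  have hψd : DifferentiableOn ℂ ψ Ω :=
    hφim ▸ differentiableOn_image_of_leftInvOn hφd isOpen_ball hψφ
  have hφm : MapsTo φ (ball 0 1) Ω := hφim ▸ mapsTo_image φ _
  have hψm : MapsTo ψ Ω (ball 0 1) := hφim ▸ hψφ.mapsTo (surjOn_image φ _)
  obtain ⟨C, hC⟩ := exists_forall_norm_deriv_le_of_ball_subset hbdd isOpen_ball hφd
    hψd.continuousOn hψm hψφ hρ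
  obtain ⟨κ, hκ, hψκ⟩ := exists_pos_forall_le_one_sub_norm_of_ball_subset hbdd
    hψd.continuousOn hψm (ρ := R / 2) (by positivity)
  refine ⟨max C (64 * R * (4 / κ) ^ β), fun z hz ↦ ?_⟩
  have hz0 : 0 < 1 - ‖z‖ := sub_pos.2 (mem_ball_zero_iff.1 hz)
  obtain hdeep | ⟨n, s, ⟨hs, hsR⟩, h⟩ := hflat (φ z) (hφm hz)
  · have hone : 1 ≤ (1 - ‖z‖) ^ (β - 1) := one_le_rpow_of_pos_of_le_one_of_nonpos hz0
      (sub_le_self 1 (norm_nonneg z)) (sub_nonpos.2 hβ1)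
    calc ‖deriv φ z‖ ≤ max C (64 * R * (4 / κ) ^ β) := (hC z hz hdeep).trans (le_max_left _ _)
      _ ≤ _ := le_mul_of_one_le_right (le_max_of_le_right (by positivity)) hone
  have hball : ball z (1 - ‖z‖) ⊆ ball 0 1 := ball_subset_ball' (by simp)
  have hdepth := h.depth_le hη (by linarith) hs (by linarith) (by linarith) hβ hβ1 hηβ hψd hψm hκ
    (hψκ _ (h.ball_subset hη4 hs.le (by linarith) (by linarith)))
  rw [hψφ hz, mul_div_right_comm, mul_rpow (by positivity) hz0.le] at hdepth
  calc ‖deriv φ z‖ ≤ 32 * s / (1 - ‖z‖) :=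
        h.norm_deriv_le hη4 hs (by linarith) hz0 (hφd.mono hball) (hφm.mono_left hball) rfl
    _ ≤ 32 * (2 * R * ((4 / κ) ^ β * (1 - ‖z‖) ^ β)) / (1 - ‖z‖) := by gcongr
    _ = 64 * R * (4 / κ) ^ β * (1 - ‖z‖) ^ (β - 1) := by
      rw [rpow_sub_one hz0.ne']
      ring
    _ ≤ max C (64 * R * (4 / κ) ^ β) * (1 - ‖z‖) ^ (β - 1) := by
      gcongr
      exact le_max_right _ _

end DerivativeGrowth

theorem conformal_derivative_integrability_quasidisc_general {F : ℂ → ℝ} {Ω : Set ℂ}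
    (hF : IsC1DefiningFunction F Ω) {φ : ℂ → ℂ} (hφd : DifferentiableOn ℂ φ (ball 0 1))
    (hφi : InjOn φ (ball 0 1)) (hφim : φ '' ball 0 1 = Ω) {p : ℝ} (hp : 0 ≤ p) :
    ∫⁻ z in ball (0 : ℂ) 1, ‖deriv φ z‖ₑ ^ p < ⊤ := by
  obtain ⟨β, hβ0, hβ1, hβp⟩ : ∃ β : ℝ, 0 < β ∧ β < 1 ∧ -1 < (β - 1) * p :=
    ⟨(2 * p + 1) / (2 * p + 2), by positivity, by rw [div_lt_one (by positivity)]; linarith, by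
      rw [div_sub_one (by positivity), div_mul_eq_mul_div, lt_div_iff₀ (by positivity)]
      linarith⟩
  have hcos : 0 < cos (β * (π / 2)) :=
    cos_pos_of_mem_Ioo ⟨by nlinarith [pi_pos], by nlinarith [pi_pos]⟩
  have hη : 0 < min (1 / 4) (cos (β * (π / 2))) := lt_min (by norm_num) hcos
  obtain ⟨C, hC⟩ := exists_forall_norm_deriv_le_of_hasFlatBoundary (hF.hasFlatBoundary hη)
    hF.isBounded hη.le (min_le_left _ _) hβ0 hβ1.le (min_le_right _ _) hφd hφi hφim
  exact lintegral_enorm_rpow_lt_top_of_norm_le hp hβp hC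

/-- If `Ω` is a `C¹` `K`-quasidisc (the image of the unit disc under a `C¹`
`K`-quasiconformal homeomorphism of the plane) and `φ : 𝔻 → Ω` is a conformal
mapping of the unit disc onto `Ω`, then `φ′ ∈ L^p(𝔻)` for all `1 ≤ p` with
`p(K² − 1) < 2K²`. -/
theorem conformal_derivative_integrability_quasidisc
    (K : ℝ) (hK : 1 ≤ K) (Φ : ℂ → ℂ) (hΦ : IsC1QCPlane K Φ)
    (Ω : Set ℂ) (hΩ : Ω = Φ '' Metric.ball 0 1)
    (φ : ℂ → ℂ) (hφd : DifferentiableOn ℂ φ (Metric.ball 0 1))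
    (hφi : Set.InjOn φ (Metric.ball 0 1)) (hφim : φ '' Metric.ball 0 1 = Ω)
    (p : ℝ) (hp : 1 ≤ p) (hpK : p * (K ^ 2 - 1) < 2 * K ^ 2) :
    ∫⁻ z in Metric.ball (0 : ℂ) 1, (‖deriv φ z‖₊ : ℝ≥0∞) ^ p < ⊤ := by
  obtain ⟨H, rfl, hH⟩ := exists_homeomorph_contDiff_symm hΦ.1 hΦ.2.1 fun z ↦ (hΦ.2.2 z).1.ne'
  exact conformal_derivative_integrability_quasidisc_general
    (isC1DefiningFunction_norm_symm_sq_sub_one H (hΦ.1.differentiable one_ne_zero) hH)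
    hφd hφi (hφim.trans hΩ) (zero_le_one.trans hp)
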